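/- Let φ > 1 be an integer. There is a constant c > 0 with the following property. Let A be an oracle assigning a binary advice string to every feasible port-numbered graph, and let f be a function such that for every feasible port-numbered graph G with election index φ, the assignment v ↦ f(A(G), B^φ(v)) is a leader election output for G. Then there exist infinitely many integers n for which some n-node feasible port-numbered graph G with election index φ satisfies |A(G)| ≥ c·n·(log log n)²/log n. That is, leader election in time φ in graphs of election index φ requires advice of size Ω(n (log log n)²/log n). -/

import Mathlib

/-!
Attach to each of `k` units a hub, join the hubs to form a clique, and let the port numbers between
the hubs record the differences `σ h' - σ h` of a permutation `σ` of `ZMod k`. A clique of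
`O(log k / log log k)` vertices pending at each hub carries, in the ports leading back to the hub,
an identifier of the unit; hence the hub is identified by its view at depth `1`, and every other
vertex by its view at depth `φ`, while the ends of paths of length `φ - 1` pending at the hubs all
look alike at depth `φ - 1`. So the election index is `φ`.

At depth `φ` the end of a path sees only the ports of its own hub, and these are, up to order, the
same for every `σ`. With equal advice its output is therefore the same for all `σ`. But the ports
along a path to the leader add up to the difference between the values of `σ` at the two ends, so
the outputs of all path ends determine `σ` up to an additive constant. Thus about `k! / k` instances
on `n = O(k log k / log log k)` nodes need distinct advice, and some advice has length
`Ω(k log k) = Ω(n log log n)`.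
-/

namespace Election

/-- A port-numbered graph: a simple undirected connected graph on `n ≥ 3` unlabeled nodes
(vertex set `Fin n`) in which, at each node `v` of degree `d`, the edges incident to `v`
carry distinct port numbers `0, …, d-1` at `v`. `portNum v u` is the port number at `v`
of the edge `{v, u}` (meaningful only when `v` and `u` are adjacent). -/
structure PortGraph where
  n : ℕ
  three_le : 3 ≤ n
  G : SimpleGraph (Fin n)
  conn : G.Connected
  portNum : Fin n → Fin n → ℕ
  port_lt : ∀ v u : Fin n, G.Adj v u → portNum v u < Nat.card {w : Fin n // G.Adj v w}
  port_inj : ∀ v u w : Fin n, G.Adj v u → G.Adj v w → portNum v u = portNum v w → u = w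

namespace PortGraph

/-- The degree of a node. -/
noncomputable def degree (PG : PortGraph) (v : Fin PG.n) : ℕ :=
  Nat.card {w : Fin PG.n // PG.G.Adj v w}

open Classical in
/-- The neighbor of `v` reached through port `p` (junk value `v` if there is none). -/
noncomputable def nbr (PG : PortGraph) (v : Fin PG.n) (p : ℕ) : Fin PG.n :=
  if h : ∃ u : Fin PG.n, PG.G.Adj v u ∧ PG.portNum v u = p then h.choose else v

/-- Abstract (augmented truncated) views: a view at depth `0` is a leaf carrying a degree;
a view at depth `ℓ+1` is a node whose children are listed in the order of the port numbers
`0, …, d-1` at the root, each child carrying the port number at the other endpoint of the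
corresponding edge together with the subview at depth `ℓ`. -/
inductive AugView : Type
  | leaf (deg : ℕ) : AugView
  | node (children : List (ℕ × AugView)) : AugView

/-- The augmented truncated view `B^ℓ(v)` of node `v` at depth `ℓ`. -/
noncomputable def augView (PG : PortGraph) : ℕ → Fin PG.n → AugView
  | 0, v => AugView.leaf (PG.degree v)
  | (ℓ + 1), v => AugView.node ((List.range (PG.degree v)).map
      fun p => (PG.portNum (PG.nbr v p) v, PG.augView ℓ (PG.nbr v p)))

/-- `IsPath PG v s vs` means: the sequence `s = (p₁, q₁, …, p_k, q_k)` of port numbers codes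
a path in `PG` starting at `v` whose i-th edge carries port `p_i` at the endpoint closer to
`v` and `q_i` at the other endpoint, and `vs` is the list of visited vertices (from `v` on). -/
inductive IsPath (PG : PortGraph) : Fin PG.n → List ℕ → List (Fin PG.n) → Prop
  | nil (v : Fin PG.n) : IsPath PG v [] [v]
  | cons (v u : Fin PG.n) (p q : ℕ) (rest : List ℕ) (vs : List (Fin PG.n))
      (hadj : PG.G.Adj v u) (hp : PG.portNum v u = p) (hq : PG.portNum u v = q)
      (htail : IsPath PG u rest vs) : IsPath PG v (p :: q :: rest) (v :: vs)

/-- `P` is a leader election output for `PG`: every node `v` outputs a sequence of port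
numbers coding a simple path starting at `v`, and all these paths end at a common node. -/
def IsLeaderElection (PG : PortGraph) (P : Fin PG.n → List ℕ) : Prop :=
  ∃ leader : Fin PG.n, ∀ v : Fin PG.n, ∃ vs : List (Fin PG.n),
    PG.IsPath v (P v) vs ∧ vs.Nodup ∧ vs.getLast? = some leader

/-- A graph is feasible if at some depth all augmented truncated views are pairwise distinct. -/
def Feasible (PG : PortGraph) : Prop :=
  ∃ ℓ : ℕ, Function.Injective (PG.augView ℓ)

/-- The election index: the smallest depth at which all augmented truncated views are distinct. -/
noncomputable def electionIndex (PG : PortGraph) : ℕ :=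
  sInf {ℓ : ℕ | Function.Injective (PG.augView ℓ)}

/-- The diameter: the maximum distance between two nodes. -/
noncomputable def diam (PG : PortGraph) : ℕ :=
  sSup (Set.range fun p : Fin PG.n × Fin PG.n => PG.G.dist p.1 p.2)

end PortGraph

namespace PortGraph

variable {PG PG' : PortGraph}

theorem nbr_portNum {v u : Fin PG.n} (h : PG.G.Adj v u) : PG.nbr v (PG.portNum v u) = u := by
  have hex : ∃ w, PG.G.Adj v w ∧ PG.portNum v w = PG.portNum v u := ⟨u, h, rfl⟩
  rw [nbr, dif_pos hex]
  exact PG.port_inj v _ _ hex.choose_spec.1 h hex.choose_spec.2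

theorem exists_adj_portNum_eq (v : Fin PG.n) {p : ℕ} (hp : p < PG.degree v) :
    ∃ u, PG.G.Adj v u ∧ PG.portNum v u = p := by
  have hbij : Function.Bijective
      (fun u : {u : Fin PG.n // PG.G.Adj v u} =>
        (⟨PG.portNum v u, PG.port_lt v u u.2⟩ : Fin (PG.degree v))) := by
    rw [Nat.bijective_iff_injective_and_card]
    exact ⟨fun a b hab => Subtype.ext (PG.port_inj v a b a.2 b.2 (congrArg Fin.val hab)),
      (Nat.card_fin _).symm⟩
  obtain ⟨⟨u, hu⟩, hup⟩ := hbij.2 ⟨p, hp⟩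
  exact ⟨u, hu, congrArg Fin.val hup⟩

theorem augView_zero_eq_iff {v : Fin PG.n} {v' : Fin PG'.n} :
    PG.augView 0 v = PG'.augView 0 v' ↔ PG.degree v = PG'.degree v' := by
  simp only [augView, AugView.leaf.injEq]

theorem augView_succ_eq_iff {ℓ : ℕ} {v : Fin PG.n} {v' : Fin PG'.n} :
    PG.augView (ℓ + 1) v = PG'.augView (ℓ + 1) v' ↔
      PG.degree v = PG'.degree v' ∧
      ∀ u, PG.G.Adj v u → ∃ u', PG'.G.Adj v' u' ∧ PG.portNum v u = PG'.portNum v' u' ∧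
        PG.portNum u v = PG'.portNum u' v' ∧ PG.augView ℓ u = PG'.augView ℓ u' := by
  simp only [augView, AugView.node.injEq]
  refine ⟨fun h => ?_, fun ⟨hdeg, h⟩ => ?_⟩
  · have hdeg : PG.degree v = PG'.degree v' := by simpa using congrArg List.length h
    refine ⟨hdeg, fun u hu => ?_⟩
    have hlt : PG.portNum v u < PG.degree v := PG.port_lt v u hu
    obtain ⟨u', hu', hport⟩ := exists_adj_portNum_eq v' (hdeg ▸ hlt)
    rw [← hdeg] at h
    have hchild := List.map_inj_left.1 h _ (List.mem_range.2 hlt)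
    rw [nbr_portNum hu, ← hport, nbr_portNum hu', Prod.mk.injEq] at hchild
    exact ⟨u', hu', hport.symm, hchild.1, hchild.2⟩
  · rw [← hdeg]
    refine List.map_congr_left fun p hp => ?_
    obtain ⟨u, hu, rfl⟩ := exists_adj_portNum_eq v (List.mem_range.1 hp)
    obtain ⟨u', hu', hport, hback, hview⟩ := h u hu
    rw [nbr_portNum hu, hport, nbr_portNum hu', hback, hview]

theorem augView_eq_of_succ {ℓ : ℕ} {v : Fin PG.n} {v' : Fin PG'.n}
    (h : PG.augView (ℓ + 1) v = PG'.augView (ℓ + 1) v') : PG.augView ℓ v = PG'.augView ℓ v' := by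
  induction ℓ generalizing v v' with
  | zero => exact augView_zero_eq_iff.2 (augView_succ_eq_iff.1 h).1
  | succ ℓ ih =>
    obtain ⟨hdeg, hadj⟩ := augView_succ_eq_iff.1 h
    refine augView_succ_eq_iff.2 ⟨hdeg, fun u hu => ?_⟩
    obtain ⟨u', hu', hport, hback, hview⟩ := hadj u hu
    exact ⟨u', hu', hport, hback, ih hview⟩

theorem augView_eq_of_le {ℓ m : ℕ} (hm : ℓ ≤ m) {v : Fin PG.n} {v' : Fin PG'.n}
    (h : PG.augView m v = PG'.augView m v') : PG.augView ℓ v = PG'.augView ℓ v' := by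
  induction m, hm using Nat.le_induction with
  | base => exact h
  | succ m _ ih => exact ih (augView_eq_of_succ h)

theorem electionIndex_eq_succ_iff {ℓ : ℕ} :
    PG.electionIndex = ℓ + 1 ↔
      Function.Injective (PG.augView (ℓ + 1)) ∧ ¬ Function.Injective (PG.augView ℓ) :=
  Nat.sInf_upward_closed_eq_succ_iff (s := {ℓ | Function.Injective (PG.augView ℓ)})
    (fun _ _ hle hinj _ _ h => hinj (augView_eq_of_le hle h)) ℓ

section Potential

variable {M : Type*} [AddMonoid M]

/-- The total displacement along a path coded as in `IsPath`, if leaving a node through port `p`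
amounts to a displacement by `δ p`. -/
def displacement (δ : ℕ → M) : List ℕ → M
  | p :: _ :: s => δ p + displacement δ s
  | _ => 0

variable {pot : Fin PG.n → M} {δ : ℕ → M}

theorem IsPath.potential_getLast (hpot : ∀ v u, PG.G.Adj v u → pot u = pot v + δ (PG.portNum v u))
    {v w : Fin PG.n} {s : List ℕ} {vs : List (Fin PG.n)} (h : PG.IsPath v s vs)
    (hw : vs.getLast? = some w) : pot w = pot v + displacement δ s := by
  induction h with
  | nil v =>
    obtain rfl : v = w := by simpa using hw
    simp [displacement]
  | cons v u p q rest vs hadj hp _ htail ih =>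
    obtain ⟨c, cs, rfl⟩ : ∃ c cs, vs = c :: cs := by cases htail <;> exact ⟨_, _, rfl⟩
    rw [ih (List.getLast?_cons_cons ▸ hw), hpot v u hadj, hp, add_assoc, displacement]

theorem IsLeaderElection.exists_eq_potential_add_displacement {P : Fin PG.n → List ℕ}
    (hP : PG.IsLeaderElection P)
    (hpot : ∀ v u, PG.G.Adj v u → pot u = pot v + δ (PG.portNum v u)) :
    ∃ m, ∀ v, m = pot v + displacement δ (P v) := by
  obtain ⟨leader, hleader⟩ := hP
  refine ⟨pot leader, fun v => ?_⟩
  obtain ⟨vs, hpath, -, hlast⟩ := hleader v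
  exact hpath.potential_getLast hpot hlast

end Potential

end PortGraph

/-- A port-numbered graph on an arbitrary finite type of vertices. The degrees are part of the data,
and the ports at `v` are given by a bijection from the neighbors of `v` onto `{0, …, deg v - 1}`. -/
structure PortGraphOn (V : Type*) [Fintype V] where
  three_le : 3 ≤ Fintype.card V
  G : SimpleGraph V
  conn : G.Connected
  deg : V → ℕ
  port : V → V → ℕ
  bijOn_port : ∀ v, Set.BijOn (port v) (G.neighborSet v) (Set.Iio (deg v))

namespace PortGraphOn

variable {V V' : Type*} [Fintype V] [Fintype V']

theorem natCard_neighborSet (H : PortGraphOn V) (v : V) :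
    Nat.card (H.G.neighborSet v) = H.deg v := by
  rw [Nat.card_congr (H.bijOn_port v).equiv]
  simp

/-- The enumeration of the vertices by `Fin (Fintype.card V)`, as a graph isomorphism. -/
noncomputable def iso (H : PortGraphOn V) : H.G ≃g H.G.overFin rfl := H.G.overFinIso rfl

theorem natCard_overFin_adj (H : PortGraphOn V) (a : Fin (Fintype.card V)) :
    Nat.card {b // (H.G.overFin rfl).Adj a b} = H.deg (H.iso.symm a) := by
  rw [← H.natCard_neighborSet]
  exact Nat.card_congr (H.iso.symm.mapNeighborSet a)

/-- The same port-numbered graph, with its vertices enumerated. -/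
noncomputable def toPortGraph (H : PortGraphOn V) : PortGraph where
  n := Fintype.card V
  three_le := H.three_le
  G := H.G.overFin rfl
  conn := H.iso.connected_iff.1 H.conn
  portNum a b := H.port (H.iso.symm a) (H.iso.symm b)
  port_lt a b h := by
    rw [natCard_overFin_adj]
    exact (H.bijOn_port _).mapsTo (H.iso.symm.map_adj_iff.2 h)
  port_inj a _ _ hb hc h := H.iso.symm.injective <|
    (H.bijOn_port _).injOn (H.iso.symm.map_adj_iff.2 hb) (H.iso.symm.map_adj_iff.2 hc) h

variable {H : PortGraphOn V} {H' : PortGraphOn V'}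

/-- The node of `H.toPortGraph` corresponding to a vertex of `H`. -/
noncomputable def node (H : PortGraphOn V) : V ≃ Fin H.toPortGraph.n := H.iso.toEquiv

theorem adj_node {v u : V} : H.toPortGraph.G.Adj (H.node v) (H.node u) ↔ H.G.Adj v u :=
  H.iso.map_adj_iff

theorem portNum_node (v u : V) : H.toPortGraph.portNum (H.node v) (H.node u) = H.port v u :=
  congrArg₂ H.port (H.iso.symm_apply_apply v) (H.iso.symm_apply_apply u)

theorem degree_node (v : V) : H.toPortGraph.degree (H.node v) = H.deg v :=
  (H.natCard_overFin_adj _).trans (congrArg H.deg (H.iso.symm_apply_apply v))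

/-- The augmented truncated view `B^ℓ(v)`. -/
noncomputable def view (H : PortGraphOn V) (ℓ : ℕ) (v : V) : PortGraph.AugView :=
  H.toPortGraph.augView ℓ (H.node v)

theorem injective_augView_iff {ℓ : ℕ} :
    Function.Injective (H.toPortGraph.augView ℓ) ↔ Function.Injective (H.view ℓ) :=
  (H.node.injective_comp _).symm

theorem view_zero_eq_iff {v : V} {v' : V'} : H.view 0 v = H'.view 0 v' ↔ H.deg v = H'.deg v' := by
  rw [view, view, PortGraph.augView_zero_eq_iff, degree_node, degree_node]

theorem view_succ_eq_iff {ℓ : ℕ} {v : V} {v' : V'} :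
    H.view (ℓ + 1) v = H'.view (ℓ + 1) v' ↔
      H.deg v = H'.deg v' ∧
      ∀ u, H.G.Adj v u → ∃ u', H'.G.Adj v' u' ∧ H.port v u = H'.port v' u' ∧
        H.port u v = H'.port u' v' ∧ H.view ℓ u = H'.view ℓ u' := by
  simp only [view, PortGraph.augView_succ_eq_iff, H.node.surjective.forall,
    H'.node.surjective.exists, adj_node, portNum_node, degree_node]

theorem view_eq_of_le {ℓ m : ℕ} (hm : ℓ ≤ m) {v : V} {v' : V'} (h : H.view m v = H'.view m v') :
    H.view ℓ v = H'.view ℓ v' :=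
  PortGraph.augView_eq_of_le hm h

theorem exists_eq_potential_add_displacement {M : Type*} [AddMonoid M] {pot : V → M} {δ : ℕ → M}
    {F : PortGraph.AugView → List ℕ} {ℓ : ℕ}
    (hF : H.toPortGraph.IsLeaderElection fun v => F (H.toPortGraph.augView ℓ v))
    (hpot : ∀ v u, H.G.Adj v u → pot u = pot v + δ (H.port v u)) :
    ∃ m, ∀ v, m = pot v + PortGraph.displacement δ (F (H.view ℓ v)) := by
  obtain ⟨m, hm⟩ := hF.exists_eq_potential_add_displacement (pot := pot ∘ H.node.symm) (δ := δ) <|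
    H.node.surjective.forall₂.2 fun v u h => by
      simpa [portNum_node] using hpot v u (adj_node.1 h)
  exact ⟨m, fun v => by simpa [view] using hm (H.node v)⟩

/-- The view `B^ℓ(v)` determines `v`. -/
def Identified (H : PortGraphOn V) (ℓ : ℕ) (v : V) : Prop :=
  ∀ w, H.view ℓ v = H.view ℓ w → v = w

theorem Identified.mono {ℓ m : ℕ} (hm : ℓ ≤ m) {v : V} (h : H.Identified ℓ v) :
    H.Identified m v :=
  fun w hw => h w (view_eq_of_le hm hw)

theorem Identified.of_adj {ℓ : ℕ} {v u : V} (h : H.Identified ℓ u) (hvu : H.G.Adj v u) :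
    H.Identified (ℓ + 1) v := by
  intro w hw
  obtain ⟨-, hadj⟩ := view_succ_eq_iff.1 hw
  obtain ⟨u', hwu, -, hback, hview⟩ := hadj u hvu
  obtain rfl := h u' hview
  exact (H.bijOn_port u).injOn hvu.symm hwu.symm hback

end PortGraphOn

theorem exists_card_lt_two_pow_length_mul {α β : Type*} [Fintype α] [Nonempty α] [Fintype β]
    {g : α → List Bool} {r : α → β} (hinj : Function.Injective fun a => (g a, r a)) :
    ∃ a, Fintype.card α < 2 ^ ((g a).length + 1) * Fintype.card β := by
  obtain ⟨a₀, hmax⟩ := Finite.exists_max fun a => (g a).length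
  refine ⟨a₀, ?_⟩
  let encode (a : α) : (Σ i : Fin ((g a₀).length + 1), List.Vector Bool i) × β :=
    (⟨⟨_, Nat.lt_succ_of_le (hmax a)⟩, ⟨g a, rfl⟩⟩, r a)
  have hencode : Function.Injective encode := fun a b hab =>
    hinj (congrArg (fun z => (z.1.2.toList, z.2)) hab)
  have hcard : ∑ i : Fin ((g a₀).length + 1), 2 ^ i.val < 2 ^ ((g a₀).length + 1) := by
    rw [Fin.sum_univ_eq_sum_range fun i => 2 ^ i]
    exact Nat.geomSum_lt le_rfl fun i hi => Finset.mem_range.1 hi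
  calc Fintype.card α ≤ (∑ i : Fin ((g a₀).length + 1), 2 ^ i.val) * Fintype.card β := by
        simpa [Fintype.card_sigma] using Fintype.card_le_of_injective encode hencode
    _ < _ := Nat.mul_lt_mul_of_pos_right hcard (Fintype.card_pos_iff.2 ⟨r a₀⟩)

theorem two_pow_mul_le_of_factorial_lt {m L : ℕ} (hm : 4 ≤ m)
    (h : (2 ^ m).factorial < 2 ^ (L + 1) * 2 ^ m) : 2 ^ m * m ≤ 4 * L := by
  obtain ⟨i, rfl⟩ := Nat.exists_eq_add_of_le' (show 2 ≤ m by omega)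
  have hfact : (2 ^ (i + 1)) ^ (2 ^ (i + 1)) ≤ (2 ^ (i + 2)).factorial := by
    have := Nat.factorial_mul_pow_sub_le_factorial
      (Nat.pow_le_pow_right two_pos (Nat.le_succ (i + 1)))
    rw [show 2 ^ (i + 1).succ - 2 ^ (i + 1) = 2 ^ (i + 1) by rw [pow_succ]; omega] at this
    exact (Nat.le_mul_of_pos_left _ (Nat.factorial_pos _)).trans this
  have hexp : (i + 1) * 2 ^ (i + 1) < L + 1 + (i + 2) := by
    rw [← pow_mul] at hfact
    rw [← pow_add] at h
    exact (Nat.pow_lt_pow_iff_right one_lt_two).1 (hfact.trans_lt h)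
  have hi : i < 2 ^ i := Nat.lt_two_pow_self
  rw [pow_succ] at hexp
  rw [pow_add]
  nlinarith

theorem logb_logb_le_of_le_two_rpow {z a : ℝ} (hz : 1 < z) (hza : z ≤ 2 ^ (2 : ℝ) ^ a) :
    Real.logb 2 (Real.logb 2 z) ≤ a := by
  rw [Real.logb_le_iff_le_rpow one_lt_two (Real.logb_pos one_lt_two hz),
    Real.logb_le_iff_le_rpow one_lt_two (by positivity)]
  exact hza

theorem mul_logb_logb_sq_div_logb_le {a z : ℝ} (ha : 0 ≤ a) (hz : 2 ≤ z) :
    a * Real.logb 2 (Real.logb 2 z) ^ 2 / Real.logb 2 z ≤ a * Real.logb 2 (Real.logb 2 z) := by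
  have hlog : 1 ≤ Real.logb 2 z := by
    rwa [Real.le_logb_iff_rpow_le one_lt_two (by linarith), Real.rpow_one]
  have hloglog : 0 ≤ Real.logb 2 (Real.logb 2 z) := Real.logb_nonneg one_lt_two hlog
  have hle : Real.logb 2 (Real.logb 2 z) ≤ Real.logb 2 z := by
    rw [Real.logb_le_iff_le_rpow one_lt_two (by linarith)]
    have bernoulli := one_add_mul_self_le_rpow_one_add (s := 1) (by norm_num) hlog
    rw [one_add_one_eq_two] at bernoulli
    linarith
  rw [div_le_iff₀ (by linarith), mul_assoc, sq]
  gcongr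

/-- Here `2 ^ (y * 2 ^ y) * (t + 2 + 2 ^ y)` is the number of nodes of the hard instances below that
consist of `2 ^ (y * 2 ^ y)` units with cliques of size `2 ^ y`. -/
theorem logb_logb_two_pow_mul_le {t y : ℕ} (hy : t + 2 ≤ y) :
    Real.logb 2 (Real.logb 2 (2 ^ (y * 2 ^ y) * (t + 2 + 2 ^ y))) ≤ 2 * y := by
  have hy_lt : y < 2 ^ y := Nat.lt_two_pow_self
  have hexp : y * 2 ^ y + (y + 1) ≤ 2 ^ (2 * y) := by
    rw [two_mul, pow_add]
    nlinarith
  have hle : 2 ^ (y * 2 ^ y) * (t + 2 + 2 ^ y) ≤ 2 ^ 2 ^ (2 * y) :=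
    calc 2 ^ (y * 2 ^ y) * (t + 2 + 2 ^ y) ≤ 2 ^ (y * 2 ^ y) * 2 ^ (y + 1) := by
          gcongr
          omega
      _ ≤ 2 ^ 2 ^ (2 * y) := by
          rw [← pow_add]
          exact Nat.pow_le_pow_right two_pos hexp
  refine logb_logb_le_of_le_two_rpow ?_ ?_
  · exact_mod_cast (show 1 < t + 2 + 2 ^ y by omega).trans_le
      (Nat.le_mul_of_pos_left _ (Nat.two_pow_pos _))
  · exact_mod_cast hle

theorem two_pow_mul_mul_logb_logb_le {t y : ℕ} (hy : t + 2 ≤ y) :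
    2 ^ (y * 2 ^ y) * (t + 2 + 2 ^ y) *
        Real.logb 2 (Real.logb 2 (2 ^ (y * 2 ^ y) * (t + 2 + 2 ^ y))) ≤
      2 * (t + 3) * (2 ^ (y * 2 ^ y) * (y * 2 ^ y)) := by
  have hone : (1 : ℝ) ≤ 2 ^ y := one_le_pow₀ one_le_two
  calc 2 ^ (y * 2 ^ y) * (t + 2 + 2 ^ y) *
        Real.logb 2 (Real.logb 2 (2 ^ (y * 2 ^ y) * (t + 2 + 2 ^ y)))
      ≤ 2 ^ (y * 2 ^ y) * (t + 2 + 2 ^ y) * (2 * y) := by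
        gcongr
        exact logb_logb_two_pow_mul_le hy
    _ ≤ 2 ^ (y * 2 ^ y) * ((t + 3) * 2 ^ y) * (2 * y) := by
        gcongr
        nlinarith
    _ = 2 * (t + 3) * (2 ^ (y * 2 ^ y) * (y * 2 ^ y)) := by ring

namespace HardInstance

/-- The vertices of the hard instances. Unit `h` consists of a path `tail h 0, …, tail h (t + 1)`
and of a clique on the vertices `clique h j`; all of the clique is joined to the hub `tail h 0`. -/
inductive Vertex (k x t : ℕ) : Type
  | tail (h : ZMod k) (d : Fin (t + 2))
  | clique (h : ZMod k) (j : ZMod x)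

open Vertex

variable {k x t : ℕ}

namespace Vertex

/-- A vertex is given by its unit and its position there, on the path or in the clique. -/
def equivProd : Vertex k x t ≃ ZMod k × (Fin (t + 2) ⊕ ZMod x) where
  toFun
    | tail h d => (h, .inl d)
    | clique h j => (h, .inr j)
  invFun
    | (h, .inl d) => tail h d
    | (h, .inr j) => clique h j
  left_inv := by rintro (⟨h, d⟩ | ⟨h, j⟩) <;> rfl
  right_inv := by rintro ⟨h, d | j⟩ <;> rfl

noncomputable instance [NeZero k] [NeZero x] : Fintype (Vertex k x t) :=
  .ofEquiv _ equivProd.symm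

theorem card [NeZero k] [NeZero x] : Fintype.card (Vertex k x t) = k * (t + 2 + x) := by
  simp [Fintype.card_congr equivProd, ZMod.card]

/-- The index of the unit to which a vertex belongs. -/
def unit : Vertex k x t → ZMod k
  | tail h _ => h
  | clique h _ => h

end Vertex

/-- The disjoint union of all units, with their hubs joined to form a clique. -/
def graph (k x t : ℕ) : SimpleGraph (Vertex k x t) where
  Adj
    | tail h d, tail h' d' =>
        h = h' ∧ (SimpleGraph.pathGraph _).Adj d d' ∨ h ≠ h' ∧ d = 0 ∧ d' = 0
    | tail h d, clique h' _ => h = h' ∧ d = 0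
    | clique h _, tail h' d' => h = h' ∧ d' = 0
    | clique h j, clique h' j' => h = h' ∧ j ≠ j'
  symm := ⟨by
    rintro (⟨h, d⟩ | ⟨h, j⟩) (⟨h', d'⟩ | ⟨h', j'⟩) <;>
      simp only [SimpleGraph.adj_comm, and_comm, eq_comm, ne_comm, imp_self]⟩
  loopless := ⟨by rintro (⟨h, d⟩ | ⟨h, j⟩) <;> simp⟩

theorem adj_tail_tail {h h' : ZMod k} {d d' : Fin (t + 2)} :
    (graph k x t).Adj (tail h d) (tail h' d') ↔
      h = h' ∧ (d.val + 1 = d'.val ∨ d'.val + 1 = d.val) ∨ h ≠ h' ∧ d = 0 ∧ d' = 0 := by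
  rw [← SimpleGraph.pathGraph_adj]
  rfl

theorem adj_tail_clique {h h' : ZMod k} {d : Fin (t + 2)} {j : ZMod x} :
    (graph k x t).Adj (tail h d) (clique h' j) ↔ h = h' ∧ d = 0 :=
  .rfl

theorem adj_clique_tail {h h' : ZMod k} {d : Fin (t + 2)} {j : ZMod x} :
    (graph k x t).Adj (clique h j) (tail h' d) ↔ h = h' ∧ d = 0 :=
  .rfl

theorem reachable_tail_zero (h : ZMod k) (d : Fin (t + 2)) :
    (graph k x t).Reachable (tail h d) (tail h 0) :=
  let path : SimpleGraph.pathGraph (t + 2) →g graph k x t := ⟨tail h, fun had => .inl ⟨rfl, had⟩⟩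
  ((SimpleGraph.pathGraph_connected _).preconnected d 0).map path

theorem reachable_hub : ∀ v : Vertex k x t, (graph k x t).Reachable v (tail v.unit 0)
  | tail h d => reachable_tail_zero h d
  | clique _ _ => (adj_clique_tail.2 ⟨rfl, rfl⟩).reachable

theorem graph_connected : (graph k x t).Connected := by
  refine (SimpleGraph.connected_iff_exists_forall_reachable _).2 ⟨tail 0 0, fun v => ?_⟩
  refine .symm ((reachable_hub v).trans ?_)
  by_cases h0 : v.unit = 0
  · rw [h0]
  · exact (adj_tail_tail.2 (.inr ⟨h0, rfl, rfl⟩)).reachable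

/-- The degrees in `graph k x t`. -/
def deg : Vertex k x t → ℕ
  | tail _ d => if d = 0 then x + k else if d = Fin.last _ then 1 else 2
  | clique _ _ => x

/-- The port numbers of the hard instances. The hub of unit `h` is joined to the hub of unit `h'` by
port `x + (σ h' - σ h)`, and to the next vertex of its path by the remaining port `x`. The
port from `clique h j` to `clique h j'` is shifted by `code h j`, so that the remaining
port `code h j` leads to the hub. -/
def port (code : ZMod k → ZMod x → ZMod x) (σ : Equiv.Perm (ZMod k)) :
    Vertex k x t → Vertex k x t → ℕ
  | tail h d, tail h' d' =>
      if d = 0 then x + (σ h' - σ h).val else if d' < d then 0 else 1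
  | tail _ _, clique _ j => j.val
  | clique h j, tail _ _ => (code h j).val
  | clique h j, clique _ j' => (code h j + (j' - j)).val

section Ports

variable (code : ZMod k → ZMod x → ZMod x) (σ : Equiv.Perm (ZMod k))

theorem bijOn_port_clique [NeZero x] (h : ZMod k) (j : ZMod x) :
    Set.BijOn (port code σ (clique h j)) ((graph k x t).neighborSet (clique h j))
      (Set.Iio (deg (clique h j : Vertex k x t))) := by
  refine ⟨?_, ?_, fun p (hp : p < x) => ?_⟩
  · rintro (⟨b, e⟩ | ⟨b, i⟩) _ <;> exact ZMod.val_lt _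
  · have hne {i : ZMod x} (hi : j ≠ i) : code h j ≠ code h j + (i - j) := by
      simpa [sub_eq_zero] using hi.symm
    rintro (⟨b, e⟩ | ⟨b, i⟩) ⟨rfl, hu⟩ (⟨c, f⟩ | ⟨c, l⟩) ⟨rfl, hw⟩ huw <;>
      replace huw := ZMod.val_injective _ huw
    · rw [hu, hw]
    · exact absurd huw (hne hw)
    · exact absurd huw.symm (hne hu)
    · rw [sub_left_inj.1 (add_right_injective _ huw)]
  · have hval : (p : ZMod x).val = p := ZMod.val_cast_of_lt hp
    by_cases hhub : (p : ZMod x) = code h j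
    · exact ⟨tail h 0, ⟨rfl, rfl⟩, by rw [port, ← hhub, hval]⟩
    · refine ⟨clique h (p - code h j + j), ⟨rfl, ?_⟩, ?_⟩
      · simpa [sub_eq_zero] using hhub
      · simpa [port] using hval

theorem bijOn_port_hub [NeZero k] [NeZero x] (h : ZMod k) :
    Set.BijOn (port code σ (tail h 0)) ((graph k x t).neighborSet (tail h 0))
      (Set.Iio (deg (tail h 0 : Vertex k x t))) := by
  refine ⟨?_, ?_, fun p (hp : p < x + k) => ?_⟩
  · rintro (⟨b, e⟩ | ⟨b, i⟩) _
    · exact Nat.add_lt_add_left (ZMod.val_lt _) x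
    · exact Nat.lt_add_right k (ZMod.val_lt i)
  · rintro (⟨b, e⟩ | ⟨b, i⟩) hu (⟨c, f⟩ | ⟨c, l⟩) hw huw
    · obtain rfl : b = c := by
        simpa using ZMod.val_injective _ (Nat.add_left_cancel huw)
      have := (adj_tail_tail (x := x)).1 hu
      have := (adj_tail_tail (x := x)).1 hw
      grind
    · have : x + (σ b - σ h).val = l.val := huw
      have := ZMod.val_lt l
      omega
    · have : i.val = x + (σ c - σ h).val := huw
      have := ZMod.val_lt i
      omega
    · rw [← hu.1, ← hw.1, ZMod.val_injective _ huw]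
  · obtain hpx | ⟨q, rfl⟩ := (lt_or_ge p x).imp_right Nat.exists_eq_add_of_le
    · exact ⟨clique h p, ⟨rfl, rfl⟩, ZMod.val_cast_of_lt hpx⟩
    · have hport (d : Fin (t + 2)) :
          port code σ (tail h 0) (tail (σ.symm (σ h + q)) d) = x + q := by
        simp [port, ZMod.val_cast_of_lt (Nat.lt_of_add_lt_add_left hp)]
      by_cases hself : h = σ.symm (σ h + q)
      · exact ⟨_, (adj_tail_tail (x := x)).2 (.inl ⟨hself, .inl rfl⟩), hport 1⟩
      · exact ⟨_, (adj_tail_tail (x := x)).2 (.inr ⟨hself, rfl, rfl⟩), hport 0⟩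

theorem bijOn_port_tail (h : ZMod k) {d : Fin (t + 2)} (hd : d ≠ 0) :
    Set.BijOn (port code σ (tail h d)) ((graph k x t).neighborSet (tail h d))
      (Set.Iio (deg (tail h d : Vertex k x t))) := by
  have : d.val ≠ 0 := Fin.val_ne_zero_iff.2 hd
  simp only [deg, if_neg hd]
  refine ⟨?_, ?_, fun p hp => ?_⟩
  · rintro (⟨b, e⟩ | ⟨b, i⟩) hu
    · have := (adj_tail_tail (x := x)).1 hu
      simp only [port, if_neg hd, Set.mem_Iio]
      grind
    · exact absurd hu.2 hd
  · rintro (⟨b, e⟩ | ⟨b, i⟩) hu (⟨c, f⟩ | ⟨c, l⟩) hw huw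
    · have := (adj_tail_tail (x := x)).1 hu
      have := (adj_tail_tail (x := x)).1 hw
      simp only [port, if_neg hd] at huw
      grind
    · exact absurd hw.2 hd
    · exact absurd hu.2 hd
    · exact absurd hu.2 hd
  · by_cases hp0 : p = 0
    · refine ⟨tail h ⟨d - 1, by omega⟩, (adj_tail_tail (x := x)).2 (.inl ⟨rfl, .inr ?_⟩), ?_⟩
      · grind
      · simp only [port]
        grind
    · have hp1 : p = 1 ∧ d ≠ Fin.last _ := by grind
      refine ⟨tail h ⟨d + 1, by grind⟩, (adj_tail_tail (x := x)).2 (.inl ⟨rfl, .inl rfl⟩), ?_⟩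
      simp only [port]
      grind

theorem perm_unit_eq_add_port [NeZero k] [NeZero x] {v u : Vertex k x t}
    (hvu : (graph k x t).Adj v u) :
    σ u.unit = σ v.unit + ((port code σ v u - x : ℕ) : ZMod k) := by
  suffices u.unit = v.unit ∧ port code σ v u ≤ x ∨
      port code σ v u = x + (σ u.unit - σ v.unit).val by
    obtain ⟨hunit, hport⟩ | hport := this
    · rw [hunit, Nat.sub_eq_zero_of_le hport, Nat.cast_zero, add_zero]
    · rw [hport, Nat.add_sub_cancel_left, ZMod.natCast_zmod_val, add_sub_cancel]
  match v, u with
  | tail h d, tail h' d' =>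
    by_cases hd : d = 0
    · exact .inr (if_pos hd)
    · have := NeZero.pos x
      have := adj_tail_tail.1 hvu
      simp only [port, unit]
      grind
  | tail h d, clique h' j' => exact .inl ⟨hvu.1.symm, (ZMod.val_lt _).le⟩
  | clique h j, tail h' d' => exact .inl ⟨hvu.1.symm, (ZMod.val_lt _).le⟩
  | clique h j, clique h' j' => exact .inl ⟨hvu.1.symm, (ZMod.val_lt _).le⟩

end Ports

variable [NeZero k] [NeZero x]

/-- The hard instance with identifiers `code h` written into the cliques, and with the ports between
the hubs arranged according to `σ`. -/
noncomputable def portGraphOn (t : ℕ) (code : ZMod k → ZMod x → ZMod x)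
    (σ : Equiv.Perm (ZMod k)) : PortGraphOn (Vertex k x t) where
  three_le := by
    have := NeZero.pos x
    rw [Vertex.card]
    exact (show 3 ≤ t + 2 + x by omega).trans (Nat.le_mul_of_pos_left _ (NeZero.pos k))
  G := graph k x t
  conn := graph_connected
  deg := deg
  port := port code σ
  bijOn_port
    | tail h d => by
      by_cases hd : d = 0
      · rw [hd]
        exact bijOn_port_hub code σ h
      · exact bijOn_port_tail code σ h hd
    | clique h j => bijOn_port_clique code σ h j

variable (code : ZMod k → ZMod x → ZMod x) (σ σ' : Equiv.Perm (ZMod k))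

/-- Relabeling the units so that the differences of `σ` become those of `σ'` matches the edges. -/
theorem view_one_hub_eq (h : ZMod k) :
    (portGraphOn t code σ).view 1 (tail h 0) = (portGraphOn t code σ').view 1 (tail h 0) := by
  refine PortGraphOn.view_succ_eq_iff.2 ⟨rfl, ?_⟩
  rintro (⟨b, e⟩ | ⟨b, j⟩) hu
  · set b' := σ'.symm (σ' h + (σ b - σ h))
    have hb' : σ' b' = σ' h + (σ b - σ h) := σ'.apply_symm_apply _
    have hiff : h = b' ↔ h = b := by
      rw [← σ'.injective.eq_iff, hb', left_eq_add, sub_eq_zero, σ.injective.eq_iff, eq_comm]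
    refine ⟨tail b' e, ?_, ?_, ?_, PortGraphOn.view_zero_eq_iff.2 rfl⟩
    · exact adj_tail_tail.2 (by rw [ne_eq, hiff]; exact adj_tail_tail.1 hu)
    · simp [portGraphOn, port, hb']
    · simp [portGraphOn, port, hb']
  · exact ⟨clique b j, hu, rfl, rfl, PortGraphOn.view_zero_eq_iff.2 rfl⟩

variable {code σ σ'}

theorem view_tail_eq_of_view_hub_eq {h h' : ZMod k} {m : ℕ}
    (hhub : (portGraphOn t code σ).view m (tail h 0) =
      (portGraphOn t code σ').view m (tail h' 0))
    {ℓ : ℕ} {d : Fin (t + 2)} (hℓ : ℓ ≤ d + m) :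
    (portGraphOn t code σ).view ℓ (tail h d) = (portGraphOn t code σ').view ℓ (tail h' d) := by
  induction ℓ generalizing d with
  | zero => exact PortGraphOn.view_zero_eq_iff.2 rfl
  | succ ℓ ih =>
    by_cases hd : d = 0
    · subst hd
      exact PortGraphOn.view_eq_of_le (by simpa using hℓ) hhub
    refine PortGraphOn.view_succ_eq_iff.2 ⟨rfl, ?_⟩
    rintro (⟨b, e⟩ | ⟨b, j⟩) hu
    · obtain ⟨rfl, hde⟩ := (adj_tail_tail.1 hu).resolve_right fun hu => hd hu.2.1
      exact ⟨tail h' e, adj_tail_tail.2 (.inl ⟨rfl, hde⟩), by simp [portGraphOn, port, hd],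
        by simp [portGraphOn, port], ih (by omega)⟩
    · exact absurd (adj_tail_clique.1 hu).2 hd

theorem not_injective_view (hk : 1 < k) :
    ¬ Function.Injective ((portGraphOn t code σ).view (t + 1)) := by
  intro hinj
  have : Fact (1 < k) := ⟨hk⟩
  have hview := view_tail_eq_of_view_hub_eq (σ := σ) (σ' := σ) (code := code) (t := t)
    (h := 0) (h' := 1) (m := 0) (PortGraphOn.view_zero_eq_iff.2 rfl) (d := Fin.last _) le_rfl
  have hunit : (0 : ZMod k) = 1 := congrArg unit (hinj hview)
  exact zero_ne_one hunit

theorem identified_hub (hk : 1 < k) (hcode : Function.Injective code) (h : ZMod k) :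
    (portGraphOn t code σ).Identified 1 (tail h 0) := by
  intro w hw
  obtain ⟨hdeg, hadj⟩ := PortGraphOn.view_succ_eq_iff.1 hw
  have hx := NeZero.pos x
  replace hdeg : x + k = deg w := hdeg
  match w with
  | clique h' j =>
    simp only [deg] at hdeg
    omega
  | tail h' d =>
    obtain rfl : d = 0 := by
      by_contra hd
      simp only [deg, if_neg hd] at hdeg
      split_ifs at hdeg <;> omega
    suffices code h = code h' by rw [hcode this]
    funext j
    obtain ⟨u, hu, hport, hback, -⟩ := hadj (clique h j) (adj_tail_clique.2 ⟨rfl, rfl⟩)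
    match u with
    | tail b e =>
      have : j.val = x + (σ b - σ h').val := hport
      have := ZMod.val_lt j
      omega
    | clique b i =>
      obtain rfl : h' = b := (adj_tail_clique.1 hu).1
      obtain rfl : j = i := ZMod.val_injective _ hport
      exact ZMod.val_injective _ hback

theorem injective_view (hk : 1 < k) (hcode : Function.Injective code) :
    Function.Injective ((portGraphOn t code σ).view (t + 2)) := by
  have htail (n : ℕ) (hn : n < t + 2) (h : ZMod k) :
      (portGraphOn t code σ).Identified (n + 1) (tail h ⟨n, hn⟩) := by
    induction n with
    | zero => exact identified_hub hk hcode h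
    | succ n ih => exact (ih (by omega)).of_adj (adj_tail_tail.2 (.inl ⟨rfl, .inr rfl⟩))
  intro v w hvw
  suffices (portGraphOn t code σ).Identified (t + 2) v from this w hvw
  match v with
  | tail h d => exact (htail d d.2 h).mono (by omega)
  | clique h j =>
    exact ((identified_hub hk hcode h).of_adj (adj_clique_tail.2 ⟨rfl, rfl⟩)).mono (by omega)

theorem feasible (hk : 1 < k) (hcode : Function.Injective code) :
    (portGraphOn t code σ).toPortGraph.Feasible :=
  ⟨t + 2, PortGraphOn.injective_augView_iff.2 (injective_view hk hcode)⟩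

theorem electionIndex_eq (hk : 1 < k) (hcode : Function.Injective code) :
    (portGraphOn t code σ).toPortGraph.electionIndex = t + 2 := by
  rw [PortGraph.electionIndex_eq_succ_iff, PortGraphOn.injective_augView_iff,
    PortGraphOn.injective_augView_iff]
  exact ⟨injective_view hk hcode, not_injective_view hk⟩

/-- The far ends of the paths have the same views, hence the same outputs, in both instances, and
these outputs determine the values of the permutation relative to its value at the leader. -/
theorem perm_eq_of_isLeaderElection {F : PortGraph.AugView → List ℕ}
    (hF : (portGraphOn t code σ).toPortGraph.IsLeaderElection
      fun v => F ((portGraphOn t code σ).toPortGraph.augView (t + 2) v))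
    (hF' : (portGraphOn t code σ').toPortGraph.IsLeaderElection
      fun v => F ((portGraphOn t code σ').toPortGraph.augView (t + 2) v))
    (h0 : σ 0 = σ' 0) : σ = σ' := by
  obtain ⟨m, hm⟩ := PortGraphOn.exists_eq_potential_add_displacement
    (pot := fun v => σ v.unit) (δ := fun p => ((p - x : ℕ) : ZMod k)) hF
    fun _ _ h => perm_unit_eq_add_port code σ h
  obtain ⟨m', hm'⟩ := PortGraphOn.exists_eq_potential_add_displacement
    (pot := fun v => σ' v.unit) (δ := fun p => ((p - x : ℕ) : ZMod k)) hF'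
    fun _ _ h => perm_unit_eq_add_port code σ' h
  have hsub (h : ZMod k) : σ h - σ' h = m - m' := by
    have hview := view_tail_eq_of_view_hub_eq (view_one_hub_eq (t := t) code σ σ' h)
      (ℓ := t + 2) (d := Fin.last _) le_rfl
    rw [hm (tail h (Fin.last _)), hm' (tail h (Fin.last _)), hview, unit, add_sub_add_right_eq_sub]
  ext1 h
  exact sub_eq_zero.1 ((hsub h).trans ((hsub 0).symm.trans (sub_eq_zero.2 h0)))

theorem exists_factorial_lt_two_pow_length_mul (hk : 1 < k) (hcode : Function.Injective code)
    {A : PortGraph → List Bool} {f : List Bool → PortGraph.AugView → List ℕ}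
    (hA : ∀ PG : PortGraph, PG.Feasible → PG.electionIndex = t + 2 →
      PG.IsLeaderElection fun v => f (A PG) (PG.augView (t + 2) v)) :
    ∃ σ, k.factorial < 2 ^ ((A (portGraphOn t code σ).toPortGraph).length + 1) * k := by
  have hsolve (σ : Equiv.Perm (ZMod k)) := hA (portGraphOn t code σ).toPortGraph
    (feasible hk hcode) (electionIndex_eq hk hcode)
  have hinj : Function.Injective fun σ => (A (portGraphOn t code σ).toPortGraph, σ 0) := by
    intro σ σ' h
    obtain ⟨hadvice, h0⟩ := Prod.mk.inj h
    exact perm_eq_of_isLeaderElection (hsolve σ) (hadvice ▸ hsolve σ') h0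
  simpa [Fintype.card_perm, ZMod.card] using exists_card_lt_two_pow_length_mul hinj

theorem exists_injective_code (hk : k ≤ x ^ x) :
    ∃ code : ZMod k → ZMod x → ZMod x, Function.Injective code := by
  obtain ⟨code⟩ := Function.Embedding.nonempty_of_card_le
    (α := ZMod k) (β := ZMod x → ZMod x) (by simpa [ZMod.card] using hk)
  exact ⟨code, code.injective⟩

theorem exists_le_length_advice {y : ℕ} (hy : 2 ≤ y)
    {A : PortGraph → List Bool} {f : List Bool → PortGraph.AugView → List ℕ}
    (hA : ∀ PG : PortGraph, PG.Feasible → PG.electionIndex = t + 2 →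
      PG.IsLeaderElection fun v => f (A PG) (PG.augView (t + 2) v)) :
    ∃ PG : PortGraph, PG.n = 2 ^ (y * 2 ^ y) * (t + 2 + 2 ^ y) ∧ PG.Feasible ∧
      PG.electionIndex = t + 2 ∧ 2 ^ (y * 2 ^ y) * (y * 2 ^ y) ≤ 4 * (A PG).length := by
  have hy_lt : y < 2 ^ y := Nat.lt_two_pow_self
  have hm : 4 ≤ y * 2 ^ y := by nlinarith
  have hk : 1 < 2 ^ (y * 2 ^ y) := Nat.one_lt_two_pow (by omega)
  have hk_le : 2 ^ (y * 2 ^ y) ≤ (2 ^ y) ^ 2 ^ y := (pow_mul ..).le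
  obtain ⟨code, hcode⟩ := exists_injective_code hk_le
  obtain ⟨σ, hσ⟩ := exists_factorial_lt_two_pow_length_mul hk hcode hA
  exact ⟨(portGraphOn t code σ).toPortGraph, Vertex.card, feasible hk hcode,
    electionIndex_eq hk hcode, two_pow_mul_le_of_factorial_lt hm hσ⟩

end HardInstance

theorem advice_lower_bound_index_phi_general (φ : ℕ) (hφ : 1 < φ) :
    ∃ c : ℝ, 0 < c ∧
      ∀ (A : PortGraph → List Bool) (f : List Bool → PortGraph.AugView → List ℕ),
        (∀ PG : PortGraph, PG.Feasible → PG.electionIndex = φ →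
          PG.IsLeaderElection (fun v => f (A PG) (PG.augView φ v))) →
        ∀ N : ℕ, ∃ n : ℕ, N ≤ n ∧ ∃ PG : PortGraph, PG.n = n ∧ PG.Feasible ∧
          PG.electionIndex = φ ∧
          c * (n : ℝ) * Real.logb 2 (Real.logb 2 (n : ℝ)) ≤ ((A PG).length : ℝ) := by
  obtain ⟨t, rfl⟩ := Nat.exists_eq_add_of_le' hφ
  refine ⟨1 / (8 * (t + 3)), by positivity, fun A f hA N => ?_⟩
  let y := N + t + 2
  have hy : t + 2 ≤ y := by omega
  obtain ⟨PG, hn, hfeasible, hindex, hadvice⟩ :=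
    HardInstance.exists_le_length_advice (Nat.le_of_add_left_le hy) hA
  have hN : N ≤ PG.n := calc
    N ≤ t + 2 + 2 ^ y := by have : y < 2 ^ y := Nat.lt_two_pow_self; omega
    _ ≤ PG.n := hn ▸ Nat.le_mul_of_pos_left _ (Nat.two_pow_pos _)
  refine ⟨PG.n, hN, PG, rfl, hfeasible, hindex, ?_⟩
  have hlog : PG.n * Real.logb 2 (Real.logb 2 PG.n) ≤
      2 * (t + 3) * (2 ^ (y * 2 ^ y) * (y * 2 ^ y)) := by
    rw [hn]
    exact_mod_cast two_pow_mul_mul_logb_logb_le hy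
  have hlength : (2 : ℝ) ^ (y * 2 ^ y) * (y * 2 ^ y) ≤ 4 * (A PG).length := by
    exact_mod_cast hadvice
  rw [mul_assoc, one_div_mul_eq_div, div_le_iff₀ (by positivity)]
  nlinarith

/-- For any fixed election index `φ > 1`, leader election in time `φ` in graphs of
election index `φ` requires advice of size `Ω(n (log log n)² / log n)`. -/
theorem advice_lower_bound_index_phi (φ : ℕ) (hφ : 1 < φ) :
    ∃ c : ℝ, 0 < c ∧
      ∀ (A : PortGraph → List Bool) (f : List Bool → PortGraph.AugView → List ℕ),
        (∀ PG : PortGraph, PG.Feasible → PG.electionIndex = φ →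
          PG.IsLeaderElection (fun v => f (A PG) (PG.augView φ v))) →
        ∀ N : ℕ, ∃ n : ℕ, N ≤ n ∧ ∃ PG : PortGraph, PG.n = n ∧ PG.Feasible ∧
          PG.electionIndex = φ ∧
          c * (n : ℝ) * (Real.logb 2 (Real.logb 2 (n : ℝ)))^2 / Real.logb 2 (n : ℝ)
            ≤ ((A PG).length : ℝ) := by
  obtain ⟨c, hc, h⟩ := advice_lower_bound_index_phi_general φ hφ
  refine ⟨c, hc, fun A f hA N => ?_⟩
  obtain ⟨_, hN, PG, rfl, hfeasible, hindex, hle⟩ := h A f hA N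
  have htwo : (2 : ℝ) ≤ PG.n := by exact_mod_cast (Nat.le_succ 2).trans PG.three_le
  exact ⟨_, hN, PG, rfl, hfeasible, hindex,
    (mul_logb_logb_sq_div_logb_le (by positivity) htwo).trans hle⟩

end Election
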